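/- Let κ > 0, σ > 0, r ∈ ℝ, τ > 0 and S₀ > 0, and set a = σ²κτ/S₀. Then the function S ↦ (S/(τσ²))·e^{-rτ}·E[ (A_{σ²τ} − σ²κτ/S)^+ ] is differentiable at S₀ with derivative Δ₀ = e^{-rτ} + (κ/S₀)·e^{-rτ − 2/a} · { a · E[ (a + A_{τσ²})^{-1} · exp( 2·M_{τσ²}/(a + A_{τσ²}) ) ] − E[ exp( 2·M_{τσ²}/(a + A_{τσ²}) ) ] }. -/

import Mathlib

open MeasureTheory ProbabilityTheory Real Set

noncomputable section

/-- A standard one-dimensional Brownian motion `B` (with `B 0 = 0`, continuous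
paths, Gaussian increments and independent increments) on a probability space
with measure `P`. -/
structure IsBrownianMotion {Ω : Type*} [MeasurableSpace Ω]
    (P : Measure Ω) (B : ℝ → Ω → ℝ) : Prop where
  isProbabilityMeasure : IsProbabilityMeasure P
  measurable : ∀ t : ℝ, Measurable (B t)
  start : ∀ ω, B 0 ω = 0
  continuous_paths : ∀ ω, Continuous fun t => B t ω
  gaussian_increments : ∀ s t : ℝ, 0 ≤ s → s ≤ t →
    P.map (fun ω => B t ω - B s ω) = gaussianReal 0 (Real.toNNReal (t - s))
  indep_increments : ∀ t : ℕ → ℝ, Monotone t → 0 ≤ t 0 →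
    iIndepFun
      (fun (i : ℕ) (ω : Ω) => B (t (i + 1)) ω - B (t i) ω) P

/-- The exponential martingale `M_t = exp (B_t - t/2)`. -/
def M {Ω : Type*} (B : ℝ → Ω → ℝ) (t : ℝ) (ω : Ω) : ℝ :=
  Real.exp (B t ω - t / 2)

/-- The time integral `A_t = ∫_0^t exp (B_s - s/2) ds`. -/
def A {Ω : Type*} (B : ℝ → Ω → ℝ) (t : ℝ) (ω : Ω) : ℝ :=
  ∫ s in (0 : ℝ)..t, Real.exp (B s ω - s / 2)

/-- The time integral with drift `ν`: `A_t^{(ν)} = ∫_0^t exp (B_s + (ν - 1/2) s) ds`. -/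
def Adrift {Ω : Type*} (B : ℝ → Ω → ℝ) (ν t : ℝ) (ω : Ω) : ℝ :=
  ∫ s in (0 : ℝ)..t, Real.exp (B s ω + (ν - 1 / 2) * s)

variable {Ω : Type*} [MeasurableSpace Ω] (P : MeasureTheory.Measure Ω) (B : ℝ → Ω → ℝ)

/-!
For `m > 0` and `x < a` let `φ (m, x) = (a² m / (a - x)², a x / (a - x))` and
`w (m, x) = exp (2 / a - 2 m / (a - x))`, with `w = 0` for `x ≥ a`. The image under `φ` of the law
of `(M_t, A_t)`, weighted by `w`, is that law itself. Undoing `φ`, this expresses `P (A_t < a)` and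
the put price `E (a - A_t)⁺` through the exponential expectations of the theorem. The delta follows,
since put–call parity gives the call price and `-P (A_t > a)` is its derivative in the strike `a`.

The invariance is exact on a grid, once `∫ M` over a cell is approximated by the geometric mean of
`M` at the end points and the log-normal ratio `y⁻²` of consecutive values of `M` is replaced by one
for which `y` has density proportional to `exp (-(2 / h) * (y + 1 / y))` on a mesh `h`. In the
variable `y`, the map `φ` then acts as a translation, and the density compensates it by `w`. A
weight turns the Gaussian steps into these hyperbolic ones; normalised, its second moment over one
cell is `1 + O(h²)`, so over the `t / h` cells of `[0, t]` it tends to `1` in `L²`.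
-/

section HyperbolicStep

open scoped ENNReal

/-- One step of the discretised chain `(M, A)` on a grid of mesh `h`, as an operator on test
functions: `y` stands for `exp (-Δ/2)`, with `Δ` the increment of `log M`, and has the
(unnormalised) density `exp (-(2 / h) * (y + 1 / y))` in place of a log-normal one. -/
def hyperbolicStep (h : ℝ) (F : ℝ × ℝ → ℝ≥0∞) (z : ℝ × ℝ) : ℝ≥0∞ :=
  ∫⁻ y in Ioi (0 : ℝ), ENNReal.ofReal (exp (-(2 / h) * (y + y⁻¹))) *
    F (z.1 / y ^ 2, z.2 + h * z.1 / y)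

/-- The action `(m, x) ↦ (a² m / (a - x)², a x / (a - x))` on the states of `(M, A)`; the path
`s ↦ A_s` is sent to `s ↦ a A_s / (a - A_s)`. -/
def mobiusShift (a : ℝ) (z : ℝ × ℝ) : ℝ × ℝ :=
  (a ^ 2 * z.1 / (a - z.2) ^ 2, a * z.2 / (a - z.2))

/-- The density `exp (2 / a - 2 m / (a - x))` on `x < a`, and `0` on `a ≤ x`, that compensates
`mobiusShift a`; `expNegInvGlue` takes care of both cases when `0 < m`. -/
def mobiusDensity (a : ℝ) (z : ℝ × ℝ) : ℝ :=
  exp (2 / a) * expNegInvGlue ((a - z.2) / (2 * z.1))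

lemma mobiusDensity_nonneg (a : ℝ) (z : ℝ × ℝ) : 0 ≤ mobiusDensity a z :=
  mul_nonneg (exp_pos _).le (expNegInvGlue.nonneg _)

lemma mobiusDensity_le (a : ℝ) (z : ℝ × ℝ) : mobiusDensity a z ≤ exp (2 / a) := by
  refine mul_le_of_le_one_right (exp_pos _).le ?_
  unfold expNegInvGlue
  split_ifs with hx
  · exact zero_le_one
  · exact exp_le_one_iff.2 (neg_nonpos.2 (inv_nonneg.2 (not_le.1 hx).le))

lemma mobiusDensity_of_div_nonpos {a : ℝ} {z : ℝ × ℝ} (hz : z.1 / (a - z.2) ≤ 0) :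
    mobiusDensity a z = 0 := by
  have : (a - z.2) / (2 * z.1) = (z.1 / (a - z.2))⁻¹ / 2 := by rw [inv_div, div_div, mul_comm]
  rw [mobiusDensity, expNegInvGlue.zero_of_nonpos, mul_zero]
  rw [this]
  exact div_nonpos_of_nonpos_of_nonneg (inv_nonpos.2 hz) zero_le_two

lemma mobiusDensity_of_div_pos {a : ℝ} {z : ℝ × ℝ} (hz : 0 < z.1 / (a - z.2)) :
    mobiusDensity a z = exp (2 / a - 2 * (z.1 / (a - z.2))) := by
  have : (a - z.2) / (2 * z.1) = (z.1 / (a - z.2))⁻¹ / 2 := by rw [inv_div, div_div, mul_comm]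
  have hpos : 0 < (z.1 / (a - z.2))⁻¹ / 2 := by positivity
  rw [mobiusDensity, this, expNegInvGlue, if_neg hpos.not_ge, ← exp_add, inv_div, div_inv_eq_mul,
    sub_eq_add_neg (2 / a)]

@[fun_prop]
lemma measurable_mobiusDensity (a : ℝ) : Measurable (mobiusDensity a) := by
  have : Measurable expNegInvGlue := (expNegInvGlue.contDiff (n := 0)).continuous.measurable
  unfold mobiusDensity
  fun_prop

@[fun_prop]
lemma measurable_mobiusShift (a : ℝ) : Measurable (mobiusShift a) := by
  unfold mobiusShift
  fun_prop

@[fun_prop]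
lemma measurable_hyperbolicStep (h : ℝ) {F : ℝ × ℝ → ℝ≥0∞} (hF : Measurable F) :
    Measurable (hyperbolicStep h F) := by
  unfold hyperbolicStep
  refine Measurable.lintegral_prod_right' (f := fun p : (ℝ × ℝ) × ℝ =>
    ENNReal.ofReal (exp (-(2 / h) * (p.2 + p.2⁻¹))) *
      F (p.1.1 / p.2 ^ 2, p.1.2 + h * p.1.1 / p.2)) ?_
  fun_prop

lemma sub_snd_step {a h y : ℝ} {z : ℝ × ℝ} (hz : z.2 ≠ a) (hy : y ≠ 0) :
    a - (z.2 + h * z.1 / y) = (a - z.2) * (y - h * (z.1 / (a - z.2))) / y := by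
  have ha : a - z.2 ≠ 0 := sub_ne_zero.2 hz.symm
  field_simp
  ring

lemma mobiusShift_step {a h y : ℝ} {z : ℝ × ℝ} (hz : z.2 ≠ a) (hy : y ≠ 0)
    (hy' : y - h * (z.1 / (a - z.2)) ≠ 0) :
    mobiusShift a (z.1 / y ^ 2, z.2 + h * z.1 / y) =
      ((mobiusShift a z).1 / (y - h * (z.1 / (a - z.2))) ^ 2,
        (mobiusShift a z).2 + h * (mobiusShift a z).1 / (y - h * (z.1 / (a - z.2)))) := by
  have ha : a - z.2 ≠ 0 := sub_ne_zero.2 hz.symm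
  obtain ⟨y', hyy'⟩ : ∃ y', y - h * (z.1 / (a - z.2)) = y' := ⟨_, rfl⟩
  have hgap := hyy' ▸ sub_snd_step (h := h) hz hy
  rw [hyy'] at hy' ⊢
  simp only [mobiusShift, hgap, Prod.mk.injEq]
  constructor
  · field_simp
  · have hmul : y * (a - z.2) = y' * (a - z.2) + h * z.1 := by
      rw [← hyy']
      field_simp
      ring
    field_simp
    linear_combination a * z.2 * hmul

lemma fst_div_sub_snd_step {a h y : ℝ} {z : ℝ × ℝ} (hz : z.2 ≠ a) (hy : y ≠ 0) :
    z.1 / y ^ 2 / (a - (z.2 + h * z.1 / y)) =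
      z.1 / (a - z.2) / (y * (y - h * (z.1 / (a - z.2)))) := by
  have ha : a - z.2 ≠ 0 := sub_ne_zero.2 hz.symm
  rw [sub_snd_step hz hy]
  field_simp

lemma mobiusDensity_step_eq_zero {a h y : ℝ} (hh : 0 < h) (hy : 0 < y) {z : ℝ × ℝ}
    (hz : z.1 / (a - z.2) ≤ 0) : mobiusDensity a (z.1 / y ^ 2, z.2 + h * z.1 / y) = 0 := by
  apply mobiusDensity_of_div_nonpos
  rcases eq_or_ne z.2 a with ha | ha
  · have : z.1 / y ^ 2 / (a - (z.2 + h * z.1 / y)) = -(z.1 / z.1) / (h * y) := by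
      rw [ha, sub_add_cancel_left]
      field_simp
    rw [this]
    refine div_nonpos_of_nonpos_of_nonneg (neg_nonpos.2 ?_) (by positivity)
    rcases eq_or_ne z.1 0 with h0 | h0 <;> simp [h0]
  · rw [fst_div_sub_snd_step ha hy.ne']
    refine div_nonpos_of_nonpos_of_nonneg hz (mul_nonneg hy.le ?_)
    linarith [mul_nonpos_of_nonneg_of_nonpos hh.le hz]

lemma exp_mul_mobiusDensity_step {a h y : ℝ} (hh : 0 < h) {z : ℝ × ℝ}
    (hz : 0 < z.1 / (a - z.2)) (hy : 0 < y) (hy' : 0 < y - h * (z.1 / (a - z.2))) :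
    exp (-(2 / h) * (y + y⁻¹)) * mobiusDensity a (z.1 / y ^ 2, z.2 + h * z.1 / y) =
      mobiusDensity a z * exp (-(2 / h) * (y - h * (z.1 / (a - z.2)) +
        (y - h * (z.1 / (a - z.2)))⁻¹)) := by
  have hza : z.2 ≠ a := by
    rintro rfl
    simp at hz
  have hq := fst_div_sub_snd_step (h := h) hza hy.ne'
  rw [mobiusDensity_of_div_pos hz, mobiusDensity_of_div_pos (by rw [hq]; positivity), hq,
    ← exp_add, ← exp_add]
  congr 1
  generalize z.1 / (a - z.2) = q at *
  obtain ⟨y', rfl⟩ : ∃ y', y = y' + h * q := ⟨_, (sub_add_cancel _ _).symm⟩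
  rw [add_sub_cancel_right] at *
  field_simp
  ring

-- In the variable `y` of the step, the shift acts as the translation by `h * m / (a - x)`.
lemma hyperbolicStep_mobiusDensity_mul {h : ℝ} (hh : 0 < h) (a : ℝ) (F : ℝ × ℝ → ℝ≥0∞)
    (z : ℝ × ℝ) :
    hyperbolicStep h (fun z => ENNReal.ofReal (mobiusDensity a z) * F (mobiusShift a z)) z =
      ENNReal.ofReal (mobiusDensity a z) * hyperbolicStep h F (mobiusShift a z) := by
  rcases le_or_gt (z.1 / (a - z.2)) 0 with hz | hz
  · rw [mobiusDensity_of_div_nonpos hz, ENNReal.ofReal_zero, zero_mul, hyperbolicStep]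
    refine (setLIntegral_congr_fun measurableSet_Ioi fun y hy => ?_).trans lintegral_zero
    simp only [mobiusDensity_step_eq_zero hh hy hz, ENNReal.ofReal_zero, zero_mul, mul_zero]
  have hza : z.2 ≠ a := by
    rintro rfl
    simp at hz
  have hshift : 0 < h * (z.1 / (a - z.2)) := by positivity
  simp only [hyperbolicStep]
  rw [← lintegral_indicator measurableSet_Ioi, ← lintegral_indicator measurableSet_Ioi,
    ← lintegral_const_mul' _ _ ENNReal.ofReal_ne_top]
  refine (lintegral_congr fun y => ?_).trans
    (lintegral_sub_right_eq_self _ (h * (z.1 / (a - z.2))))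
  rcases le_or_gt y 0 with hy | hy
  · have hy' : y - h * (z.1 / (a - z.2)) ≤ 0 := by linarith
    rw [indicator_of_notMem (notMem_Ioi.2 hy), indicator_of_notMem (notMem_Ioi.2 hy'), mul_zero]
  rw [indicator_of_mem (mem_Ioi.2 hy)]
  rcases le_or_gt (y - h * (z.1 / (a - z.2))) 0 with hy' | hy'
  · have hq : z.1 / y ^ 2 / (a - (z.2 + h * z.1 / y)) ≤ 0 := by
      rw [fst_div_sub_snd_step hza hy.ne']
      exact div_nonpos_of_nonneg_of_nonpos hz.le (mul_nonpos_of_nonneg_of_nonpos hy.le hy')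
    rw [indicator_of_notMem (notMem_Ioi.2 hy'), mobiusDensity_of_div_nonpos hq,
      ENNReal.ofReal_zero, zero_mul, mul_zero, mul_zero]
  · rw [indicator_of_mem (mem_Ioi.2 hy'), mobiusShift_step hza hy.ne' hy'.ne', ← mul_assoc,
      ← mul_assoc, ← ENNReal.ofReal_mul (exp_pos _).le,
      ← ENNReal.ofReal_mul (mobiusDensity_nonneg _ _), exp_mul_mobiusDensity_step hh hz hy hy']

lemma hyperbolicStep_iterate_mobiusDensity_mul {h : ℝ} (hh : 0 < h) (a : ℝ)
    (F : ℝ × ℝ → ℝ≥0∞) (n : ℕ) :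
    (hyperbolicStep h)^[n] (fun z => ENNReal.ofReal (mobiusDensity a z) * F (mobiusShift a z)) =
      fun z => ENNReal.ofReal (mobiusDensity a z) * (hyperbolicStep h)^[n] F (mobiusShift a z) := by
  induction n with
  | zero => rfl
  | succ n ih =>
    rw [Function.iterate_succ_apply', ih, Function.iterate_succ_apply']
    exact funext (hyperbolicStep_mobiusDensity_mul hh a _)

lemma mobiusDensity_start {a : ℝ} (ha : 0 < a) : mobiusDensity a (1, 0) = 1 := by
  rw [mobiusDensity_of_div_pos] <;> simp [ha, div_eq_mul_inv]

lemma mobiusShift_start {a : ℝ} (ha : a ≠ 0) : mobiusShift a (1, 0) = (1, 0) := by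
  simp [mobiusShift, ha]

lemma continuousAt_mobiusShift {a : ℝ} {z : ℝ × ℝ} (hz : z.2 ≠ a) :
    ContinuousAt (mobiusShift a) z := by
  have := sub_ne_zero.2 hz.symm
  unfold mobiusShift
  fun_prop (disch := simpa)

lemma continuousAt_mobiusDensity {a : ℝ} {z : ℝ × ℝ} (hz : z.1 ≠ 0) :
    ContinuousAt (mobiusDensity a) z := by
  have : Continuous expNegInvGlue := (expNegInvGlue.contDiff (n := 0)).continuous
  unfold mobiusDensity
  fun_prop (disch := simpa)

lemma continuousAt_mobiusDensity_mul {a C : ℝ} {F : ℝ × ℝ → ℝ} (hF : Continuous F)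
    (hC : ∀ z, |F z| ≤ C) {z : ℝ × ℝ} (hz : z.1 ≠ 0) :
    ContinuousAt (fun z => mobiusDensity a z * F (mobiusShift a z)) z := by
  rcases eq_or_ne z.2 a with rfl | ha
  · have h0 : mobiusDensity z.2 z = 0 := mobiusDensity_of_div_nonpos (by simp)
    have hw := continuousAt_mobiusDensity (a := z.2) hz
    rw [ContinuousAt, h0] at hw
    rw [ContinuousAt, h0, zero_mul]
    exact hw.zero_mul_isBoundedUnder_le
      (Filter.isBoundedUnder_of ⟨C, fun w => hC (mobiusShift z.2 w)⟩)
  · exact (continuousAt_mobiusDensity hz).mul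
      (hF.continuousAt.comp (continuousAt_mobiusShift ha))

lemma mobiusDensity_mul_mobiusShift {a : ℝ} (ha : 0 < a) {z : ℝ × ℝ} (hz : 0 < z.1)
    (f : ℝ → ℝ≥0∞) :
    ENNReal.ofReal (mobiusDensity a z) *
        (ENNReal.ofReal (exp (2 * (mobiusShift a z).1 / (a + (mobiusShift a z).2) - 2 / a)) *
          f (a * (mobiusShift a z).2 / (a + (mobiusShift a z).2))) =
      (Iio a).indicator f z.2 := by
  rcases lt_or_ge z.2 a with hza | hza
  · have hgap : 0 < a - z.2 := sub_pos.2 hza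
    have hsum : a + (mobiusShift a z).2 = a ^ 2 / (a - z.2) := by
      rw [mobiusShift]
      field_simp
      ring
    have hratio : 2 * (mobiusShift a z).1 / (a ^ 2 / (a - z.2)) = 2 * (z.1 / (a - z.2)) := by
      rw [mobiusShift]
      field_simp
    have hsnd : a * (mobiusShift a z).2 / (a ^ 2 / (a - z.2)) = z.2 := by
      rw [mobiusShift]
      field_simp
    rw [indicator_of_mem (mem_Iio.2 hza), hsum, hratio, hsnd, ← mul_assoc,
      ← ENNReal.ofReal_mul (mobiusDensity_nonneg a z),
      mobiusDensity_of_div_pos (div_pos hz hgap), ← exp_add]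
    simp
  · rw [indicator_of_notMem (notMem_Iio.2 hza), mobiusDensity_of_div_nonpos
      (div_nonpos_of_nonneg_of_nonpos hz.le (sub_nonpos.2 hza)), ENNReal.ofReal_zero, zero_mul]

end HyperbolicStep

section StepWeight

open scoped ENNReal

/-- The change of weight that turns a Gaussian step of variance `h` into a hyperbolic one, as a
function of the increment `x` of `log M`. -/
def stepWeight (h x : ℝ) : ℝ :=
  exp (-(4 / h) * (cosh (x / 2) - 1 - x ^ 2 / 8))

@[fun_prop]
lemma measurable_stepWeight (h : ℝ) : Measurable (stepWeight h) := by
  unfold stepWeight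
  fun_prop

/-- The ratio of the normalising constants of a hyperbolic step and of the Gaussian step that it
replaces. -/
def hyperbolicConst (h : ℝ) : ℝ≥0∞ :=
  ENNReal.ofReal (2 * (√(2 * π * h))⁻¹ * exp (4 / h - h / 8))

lemma gaussianPDF_mul_stepWeight {h : ℝ} (hh : 0 < h) (x : ℝ) :
    gaussianPDF (-h / 2) h.toNNReal x * ENNReal.ofReal (stepWeight h x) =
      hyperbolicConst h *
        (ENNReal.ofReal (exp (-x / 2) / 2) *
          ENNReal.ofReal (exp (-(2 / h) * (exp (-x / 2) + (exp (-x / 2))⁻¹)))) := by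
  rw [gaussianPDF, gaussianPDFReal, Real.coe_toNNReal _ hh.le, stepWeight,
    hyperbolicConst, ← ENNReal.ofReal_mul (by positivity), ← ENNReal.ofReal_mul (by positivity),
    ← ENNReal.ofReal_mul (by positivity), ← exp_neg, cosh_eq]
  have hexp : -(x - -h / 2) ^ 2 / (2 * h) +
      -(4 / h) * ((exp (x / 2) + exp (-(x / 2))) / 2 - 1 - x ^ 2 / 8) =
      4 / h - h / 8 + (-x / 2 + -(2 / h) * (exp (-x / 2) + exp (-(-x / 2)))) := by
    rw [show -(-x / 2) = x / 2 by ring, show -(x / 2) = -x / 2 by ring]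
    field_simp
    ring
  congr 1
  rw [mul_assoc, ← exp_add, hexp, exp_add, exp_add]
  ring

lemma lintegral_exp_neg_div_two (G : ℝ → ℝ≥0∞) :
    ∫⁻ y in Ioi (0 : ℝ), G y = ∫⁻ x, ENNReal.ofReal (exp (-x / 2) / 2) * G (exp (-x / 2)) := by
  have hderiv : ∀ x ∈ (univ : Set ℝ), HasDerivWithinAt (fun x => exp (-x / 2))
      (-(exp (-x / 2) / 2)) univ x := fun x _ =>
    ((((hasDerivAt_id x).neg.div_const 2).exp).congr_deriv (by simp; ring)).hasDerivWithinAt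
  have hinj : Function.Injective fun x : ℝ => exp (-x / 2) := fun x y hxy => by
    have := exp_injective hxy
    linarith
  have himage : (fun x : ℝ => exp (-x / 2)) '' univ = Ioi 0 := by
    rw [image_univ]
    ext y
    refine ⟨?_, fun hy => ⟨-2 * log y, ?_⟩⟩
    · rintro ⟨x, rfl⟩
      exact exp_pos _
    · simp only [neg_mul, neg_neg, mul_div_cancel_left₀ _ (two_ne_zero' ℝ)]
      exact exp_log hy
  rw [← himage, lintegral_image_eq_lintegral_abs_deriv_mul MeasurableSet.univ hderiv
    hinj.injOn, setLIntegral_univ]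
  simp only [abs_neg, abs_of_pos (half_pos (exp_pos _))]

lemma lintegral_stepWeight_mul {h : ℝ} (hh : 0 < h) {F : ℝ × ℝ → ℝ≥0∞} (hF : Measurable F)
    (z : ℝ × ℝ) :
    ∫⁻ x, ENNReal.ofReal (stepWeight h x) * F (z.1 * exp x, z.2 + h * (z.1 * exp (x / 2)))
        ∂gaussianReal (-h / 2) h.toNNReal =
      hyperbolicConst h * hyperbolicStep h F z := by
  rw [gaussianReal_of_var_ne_zero _ (by simpa using hh),
    lintegral_withDensity_eq_lintegral_mul _ (measurable_gaussianPDF _ _) (by fun_prop),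
    hyperbolicStep, lintegral_exp_neg_div_two, hyperbolicConst,
    ← lintegral_const_mul' _ _ ENNReal.ofReal_ne_top]
  refine lintegral_congr fun x => ?_
  have hm : z.1 / exp (-x / 2) ^ 2 = z.1 * exp x := by
    rw [← exp_nat_mul, div_eq_mul_inv, ← exp_neg]
    congr 2
    push_cast
    ring
  have hA : h * z.1 / exp (-x / 2) = h * (z.1 * exp (x / 2)) := by
    rw [div_eq_mul_inv, ← exp_neg, mul_assoc]
    congr 3
    ring
  rw [Pi.mul_apply, ← mul_assoc, gaussianPDF_mul_stepWeight hh, hyperbolicConst, hm, hA]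
  ring

end StepWeight

section Independence

open scoped ENNReal Topology

variable {Ω E : Type*} [MeasurableSpace Ω] [MeasurableSpace E] {μ : Measure Ω}

lemma measurable_and_indepFun_of_recursion {E' : Type*} [MeasurableSpace E'] {ξ : ℕ → Ω → E'}
    (hξ : iIndepFun ξ μ) (hm : ∀ i, Measurable (ξ i)) {Z : ℕ → Ω → E} {g : E × E' → E}
    (hg : Measurable g) {z₀ : E} (h0 : ∀ ω, Z 0 ω = z₀)
    (hs : ∀ k ω, Z (k + 1) ω = g (Z k ω, ξ k ω)) (k : ℕ) :
    Measurable (Z k) ∧ IndepFun (Z k) (ξ k) μ := by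
  have hpast : Measurable[⨆ i ∈ Iio k, MeasurableSpace.comap (ξ i) inferInstance] (Z k) := by
    induction k with
    | zero =>
      rw [funext h0]
      exact measurable_const
    | succ k ih =>
      rw [funext (hs k)]
      refine hg.comp (Measurable.prodMk (ih.mono ?_ le_rfl) ?_)
      · exact biSup_mono fun i (hi : i < k) => mem_Iio.2 (hi.trans k.lt_succ_self)
      · exact (comap_measurable (ξ k)).mono (le_iSup₂_of_le k (mem_Iio.2 k.lt_succ_self) le_rfl)
          le_rfl
  have hindep := indep_iSup_of_disjoint (fun i => (hm i).comap_le) hξ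
    (disjoint_singleton_right.2 (notMem_Iio.2 le_rfl) : Disjoint (Iio k) {k})
  rw [iSup_singleton] at hindep
  exact ⟨hpast.mono (iSup₂_le fun i _ => (hm i).comap_le) le_rfl,
    (IndepFun_iff_Indep _ _ _).2 (indep_of_indep_of_le_left hindep hpast.comap_le)⟩

lemma lintegral_prodMk_of_indepFun [IsProbabilityMeasure μ] {E' : Type*} [MeasurableSpace E']
    {Z : Ω → E} {ξ : Ω → E'} (hZ : Measurable Z) (hξ : Measurable ξ) (hi : IndepFun Z ξ μ)
    {F : E × E' → ℝ≥0∞} (hF : Measurable F) :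
    ∫⁻ ω, F (Z ω, ξ ω) ∂μ = ∫⁻ ω, ∫⁻ x, F (Z ω, x) ∂μ.map ξ ∂μ := by
  have := Measure.isProbabilityMeasure_map (μ := μ) hξ.aemeasurable
  rw [← lintegral_map hF (hZ.prodMk hξ),
    (indepFun_iff_map_prod_eq_prod_map_map hZ.aemeasurable hξ.aemeasurable).1 hi,
    lintegral_prod _ hF.aemeasurable, lintegral_map hF.lintegral_prod_right' hZ]

lemma sq_integral_le_integral_sq [IsProbabilityMeasure μ] {X : Ω → ℝ} (hX : MemLp X 2 μ) :
    (∫ ω, X ω ∂μ) ^ 2 ≤ ∫ ω, X ω ^ 2 ∂μ := by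
  have := variance_nonneg X μ
  rw [variance_eq_sub hX] at this
  exact sub_nonneg.1 this

lemma integral_prod_sub_one_sq {ι : Type*} [Fintype ι] {Y : ι → Ω → ℝ} (hY : iIndepFun Y μ)
    (hY2 : ∀ i, MemLp (Y i) 2 μ) (hY1 : ∀ i, ∫ ω, Y i ω ∂μ = 1) :
    ∫ ω, (∏ i, Y i ω - 1) ^ 2 ∂μ = ∏ i, ∫ ω, Y i ω ^ 2 ∂μ - 1 := by
  have := hY.isProbabilityMeasure
  have hmean : ∫ ω, ∏ i, Y i ω ∂μ = 1 := by
    simp [hY.integral_fun_prod_eq_prod_integral fun i => (hY2 i).1, hY1]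
  have hsq : ∫ ω, (∏ i, Y i ω) ^ 2 ∂μ = ∏ i, ∫ ω, Y i ω ^ 2 ∂μ := by
    simp only [← Finset.prod_pow]
    exact hY.integral_fun_prod_comp (f := fun _ y => y ^ 2) (fun i => (hY2 i).1.aemeasurable)
      fun i => by fun_prop
  have hsq_pos : 0 < ∏ i, ∫ ω, Y i ω ^ 2 ∂μ := Finset.prod_pos fun i _ =>
    zero_lt_one.trans_le (by simpa [hY1 i] using sq_integral_le_integral_sq (hY2 i))
  have hint : Integrable (fun ω => ∏ i, Y i ω) μ :=
    .of_integral_ne_zero (by rw [hmean]; exact one_ne_zero)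
  have hint_sq : Integrable (fun ω => (∏ i, Y i ω) ^ 2) μ :=
    .of_integral_ne_zero (by rw [hsq]; exact hsq_pos.ne')
  have hint_sub : Integrable (fun ω => (∏ i, Y i ω) ^ 2 - 2 * ∏ i, Y i ω) μ :=
    hint_sq.sub (hint.const_mul 2)
  calc ∫ ω, (∏ i, Y i ω - 1) ^ 2 ∂μ
      = ∫ ω, ((∏ i, Y i ω) ^ 2 - 2 * ∏ i, Y i ω + 1) ∂μ := by
        congr 1 with ω
        ring
    _ = ∏ i, ∫ ω, Y i ω ^ 2 ∂μ - 1 := by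
        rw [integral_add hint_sub (integrable_const 1),
          integral_sub hint_sq (hint.const_mul 2), integral_const_mul, hmean, hsq]
        simp
        ring

lemma tendsto_integral_mul_of_tendsto_integral_sub_one_sq [IsProbabilityMeasure μ]
    {D G : ℕ → Ω → ℝ} {g : Ω → ℝ} {C : ℝ} (hD2 : ∀ n, MemLp (D n) 2 μ)
    (hD : Filter.Tendsto (fun n => ∫ ω, (D n ω - 1) ^ 2 ∂μ) Filter.atTop (𝓝 0))
    (hG : ∀ n, AEStronglyMeasurable (G n) μ) (hGC : ∀ n ω, |G n ω| ≤ C)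
    (hlim : ∀ ω, Filter.Tendsto (fun n => G n ω) Filter.atTop (𝓝 (g ω))) :
    Filter.Tendsto (fun n => ∫ ω, D n ω * G n ω ∂μ) Filter.atTop (𝓝 (∫ ω, g ω ∂μ)) := by
  have hG_int : ∀ n, Integrable (G n) μ := fun n =>
    Integrable.of_bound (hG n) C (ae_of_all _ (hGC n))
  have hD_sub : ∀ n, MemLp (fun ω => D n ω - 1) 2 μ := fun n => (hD2 n).sub (memLp_const 1)
  have hD_abs : ∀ n, MemLp (fun ω => |D n ω - 1|) 2 μ := fun n => (hD_sub n).abs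
  have hmul : ∀ n, Integrable (fun ω => (D n ω - 1) * G n ω) μ := fun n =>
    ((hD_sub n).integrable one_le_two).mul_bdd (c := C) (hG n) (ae_of_all _ (hGC n))
  have hL1 : Filter.Tendsto (fun n => ∫ ω, |D n ω - 1| ∂μ) Filter.atTop (𝓝 0) := by
    refine squeeze_zero (fun n => integral_nonneg fun ω => abs_nonneg _) (fun n => ?_)
      (by simpa using hD.sqrt)
    refine Real.le_sqrt_of_sq_le ?_
    simpa only [sq_abs] using sq_integral_le_integral_sq (hD_abs n)
  have herr : Filter.Tendsto (fun n => ∫ ω, (D n ω - 1) * G n ω ∂μ) Filter.atTop (𝓝 0) := by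
    refine squeeze_zero_norm (fun n => ?_) (by simpa using hL1.mul_const C)
    rw [← integral_mul_const]
    refine norm_integral_le_of_norm_le
      (((hD_abs n).integrable one_le_two).mul_const C) (ae_of_all _ fun ω => ?_)
    rw [norm_mul, norm_eq_abs, norm_eq_abs]
    exact mul_le_mul_of_nonneg_left (hGC n ω) (abs_nonneg _)
  have hmain : Filter.Tendsto (fun n => ∫ ω, G n ω ∂μ) Filter.atTop (𝓝 (∫ ω, g ω ∂μ)) :=
    tendsto_integral_of_dominated_convergence (fun _ => C) hG (integrable_const C)
      (fun n => ae_of_all _ (hGC n)) (ae_of_all _ hlim)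
  refine (by simpa using herr.add hmain : Filter.Tendsto _ _ _).congr fun n => ?_
  rw [← integral_add (hmul n) (hG_int n)]
  congr 1 with ω
  ring

end Independence

section StepWeightEstimates

open scoped Topology

lemma one_add_sq_div_two_le_cosh (x : ℝ) : 1 + x ^ 2 / 2 ≤ cosh x := by
  have := sum_le_hasSum (Finset.range 2)
    (fun n _ => div_nonneg ((even_two_mul n).pow_nonneg x) (by positivity)) (hasSum_cosh x)
  simpa [Finset.sum_range_succ] using this

lemma cosh_sub_one_sub_sq_div_two_le (x : ℝ) : cosh x - 1 - x ^ 2 / 2 ≤ x ^ 4 * cosh x := by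
  have htail := (hasSum_nat_add_iff' 2).2 (Real.hasSum_cosh x)
  refine (le_of_eq ?_).trans (hasSum_le (fun n => ?_) htail ((Real.hasSum_cosh x).mul_left (x ^ 4)))
  · simp [Finset.sum_range_succ, sub_sub]
  · have hpow : x ^ (2 * (n + 2)) = x ^ 4 * x ^ (2 * n) := by ring
    have := (even_two_mul n).pow_nonneg x
    rw [hpow, mul_div_assoc]
    gcongr
    omega

lemma stepWeight_pos (h x : ℝ) : 0 < stepWeight h x := exp_pos _

lemma stepWeight_le_one {h : ℝ} (hh : 0 < h) (x : ℝ) : stepWeight h x ≤ 1 := by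
  have := one_add_sq_div_two_le_cosh (x / 2)
  rw [stepWeight, exp_le_one_iff, neg_mul, neg_nonpos]
  exact mul_nonneg (by positivity) (by linarith)

lemma one_sub_stepWeight_le {h : ℝ} (hh : 0 < h) (x : ℝ) :
    1 - stepWeight h x ≤ x ^ 4 * cosh (x / 2) / (4 * h) := by
  calc 1 - stepWeight h x ≤ 4 / h * (cosh (x / 2) - 1 - x ^ 2 / 8) := by
        have := one_sub_le_exp_neg (4 / h * (cosh (x / 2) - 1 - x ^ 2 / 8))
        rw [stepWeight, neg_mul]
        linarith
    _ ≤ 4 / h * ((x / 2) ^ 4 * cosh (x / 2)) := by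
        gcongr
        linarith [cosh_sub_one_sub_sq_div_two_le (x / 2)]
    _ = x ^ 4 * cosh (x / 2) / (4 * h) := by
        field_simp
        ring

lemma abs_sqrt_mul_sub_half_le {h : ℝ} (hh : 0 ≤ h) (hh1 : h ≤ 1) (g : ℝ) :
    |√h * g - h / 2| ≤ √h * (|g| + 1 / 2) := by
  have hs : √h * √h = h := mul_self_sqrt hh
  have hs1 : √h ≤ 1 := sqrt_le_one.2 hh1
  calc |√h * g - h / 2| ≤ |√h * g| + |h / 2| := abs_sub _ _
    _ = √h * (|g| + √h / 2) := by
      rw [abs_mul, abs_of_nonneg (sqrt_nonneg h), abs_of_nonneg (by positivity : 0 ≤ h / 2)]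
      linear_combination -hs / 2
    _ ≤ √h * (|g| + 1 / 2) := by gcongr

lemma one_sub_stepWeight_sqrt_mul_sub_half_le {h : ℝ} (hh : 0 < h) (hh1 : h ≤ 1) (g : ℝ) :
    1 - stepWeight h (√h * g - h / 2) ≤ h * (6 * exp (2 * |g| + 1)) := by
  have hs4 : √h ^ 4 = h ^ 2 := by rw [show 4 = 2 * 2 from rfl, pow_mul, sq_sqrt hh.le]
  have hx := abs_sqrt_mul_sub_half_le hh.le hh1 g
  refine (one_sub_stepWeight_le hh _).trans ?_
  generalize √h * g - h / 2 = x at *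
  have hv : 0 ≤ |g| + 1 / 2 := by positivity
  have hv2 : 2 * |g| + 1 = (|g| + 1 / 2) + (|g| + 1 / 2) := by ring
  have hxv : |x| ≤ |g| + 1 / 2 := hx.trans (mul_le_of_le_one_left hv (sqrt_le_one.2 hh1))
  rw [hv2, exp_add]
  generalize |g| + 1 / 2 = v at *
  have hpow : x ^ 4 ≤ h ^ 2 * (24 * exp v) := by
    calc x ^ 4 = |x| ^ 4 := (Even.pow_abs (by decide) x).symm
      _ ≤ (√h * v) ^ 4 := by gcongr
      _ = h ^ 2 * v ^ 4 := by rw [mul_pow, hs4]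
      _ ≤ h ^ 2 * (24 * exp v) := by
        have := pow_div_factorial_le_exp v hv 4
        rw [div_le_iff₀ (by positivity)] at this
        gcongr
        simpa [Nat.factorial, mul_comm] using this
  have hcosh : cosh (x / 2) ≤ exp v := by
    refine (cosh_le_cosh.2 ?_ : _ ≤ cosh v).trans ?_
    · rw [abs_div, abs_two, abs_of_nonneg hv]
      linarith [abs_nonneg x]
    · linarith [sinh_nonneg_iff.2 hv, cosh_add_sinh v]
  calc x ^ 4 * cosh (x / 2) / (4 * h)
      ≤ h ^ 2 * (24 * exp v) * exp v / (4 * h) := by gcongr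
    _ = h * (6 * (exp v * exp v)) := by
        field_simp
        norm_num

lemma exists_integral_one_sub_stepWeight_sq_le :
    ∃ K, ∀ h ∈ Ioc (0 : ℝ) 1,
      ∫ x, (1 - stepWeight h x) ^ 2 ∂gaussianReal (-h / 2) h.toNNReal ≤ K * h ^ 2 := by
  refine ⟨∫ g, (6 * exp (2 * |g| + 1)) ^ 2 ∂gaussianReal 0 1, fun h hh => ?_⟩
  have hexp : Integrable (fun g => exp (4 * |g|)) (gaussianReal 0 1) :=
    integrable_exp_mul_abs (integrable_exp_mul_gaussianReal 4)
      (integrable_exp_mul_gaussianReal (-4))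
  have hint : Integrable (fun g => (6 * exp (2 * |g| + 1)) ^ 2) (gaussianReal 0 1) := by
    refine (hexp.const_mul (36 * exp 2)).congr (ae_of_all _ fun g => ?_)
    simp only [mul_pow, ← exp_nat_mul, mul_assoc, ← exp_add]
    norm_num
    ring_nf
  have hmap : (gaussianReal 0 1).map (fun g => √h * g - h / 2) =
      gaussianReal (-h / 2) h.toNNReal := by
    have hcomp : (fun g => √h * g - h / 2) = (fun x => x - h / 2) ∘ (fun g => √h * g) := rfl
    rw [hcomp, ← Measure.map_map (by fun_prop) (by fun_prop), gaussianReal_map_const_mul,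
      gaussianReal_map_sub_const]
    congr 1
    · ring
    · ext
      simp [hh.1.le]
  rw [← hmap, integral_map (by fun_prop) (Measurable.aestronglyMeasurable (by fun_prop)),
    ← integral_mul_const]
  refine integral_mono_of_nonneg (ae_of_all _ fun g => sq_nonneg _) (hint.mul_const _)
    (ae_of_all _ fun g => ?_)
  have hle := one_sub_stepWeight_sqrt_mul_sub_half_le hh.1 hh.2 g
  have h0 : 0 ≤ 1 - stepWeight h (√h * g - h / 2) := sub_nonneg.2 (stepWeight_le_one hh.1 _)
  calc (1 - stepWeight h (√h * g - h / 2)) ^ 2 ≤ (h * (6 * exp (2 * |g| + 1))) ^ 2 := by gcongr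
    _ = (6 * exp (2 * |g| + 1)) ^ 2 * h ^ 2 := by ring

/-- The mean of `stepWeight h` over the increment of `log M` on an interval of length `h`. -/
def meanWeight (h : ℝ) : ℝ :=
  ∫ x, stepWeight h x ∂gaussianReal (-h / 2) h.toNNReal

lemma memLp_stepWeight {h : ℝ} (hh : 0 < h) (p : ENNReal) (ν : Measure ℝ) [IsFiniteMeasure ν] :
    MemLp (stepWeight h) p ν :=
  MemLp.of_bound (measurable_stepWeight h).aestronglyMeasurable 1 (ae_of_all _ fun x => by
    rw [norm_eq_abs, abs_of_pos (stepWeight_pos h x)]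
    exact stepWeight_le_one hh x)

lemma meanWeight_pos {h : ℝ} (hh : 0 < h) : 0 < meanWeight h := by
  have hint := (memLp_stepWeight hh 1 (gaussianReal (-h / 2) h.toNNReal)).integrable le_rfl
  rw [meanWeight, integral_pos_iff_support_of_nonneg (fun x => (stepWeight_pos h x).le) hint,
    Function.support_eq_univ fun x => (stepWeight_pos h x).ne', measure_univ]
  exact one_pos

lemma exists_meanWeight_bounds :
    ∃ K, ∀ h ∈ Ioc (0 : ℝ) 1, (1 - meanWeight h) ^ 2 ≤ K * h ^ 2 ∧
      ∫ x, stepWeight h x ^ 2 ∂gaussianReal (-h / 2) h.toNNReal - meanWeight h ^ 2 ≤ K * h ^ 2 := by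
  obtain ⟨K, hK⟩ := exists_integral_one_sub_stepWeight_sq_le
  refine ⟨K, fun h hh => ?_⟩
  have hf := memLp_stepWeight hh.1 2 (gaussianReal (-h / 2) h.toNNReal)
  have hmean : ∫ x, (1 - stepWeight h x) ∂gaussianReal (-h / 2) h.toNNReal = 1 - meanWeight h := by
    rw [integral_sub (integrable_const 1) (hf.integrable one_le_two), meanWeight]
    simp
  constructor
  · rw [← hmean]
    exact (sq_integral_le_integral_sq ((memLp_const 1).sub hf)).trans (hK h hh)
  · have hvar := variance_eq_sub hf
    simp only [Pi.pow_apply] at hvar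
    rw [meanWeight, ← hvar,
      ← variance_const_sub (measurable_stepWeight h).aestronglyMeasurable 1]
    exact (variance_le_expectation_sq (by fun_prop)).trans (hK h hh)

lemma eventually_div_mem_Ioc {t : ℝ} (ht : 0 < t) :
    ∀ᶠ n : ℕ in Filter.atTop, t / n ∈ Ioc (0 : ℝ) 1 := by
  obtain ⟨N, hN⟩ := exists_nat_ge t
  filter_upwards [Filter.eventually_ge_atTop N, Filter.eventually_gt_atTop 0] with n hn hn0
  have hn0' : (0 : ℝ) < n := Nat.cast_pos.2 hn0
  exact ⟨by positivity, (div_le_one hn0').2 (hN.trans (Nat.cast_le.2 hn))⟩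

lemma tendsto_meanWeight {t : ℝ} (ht : 0 < t) :
    Filter.Tendsto (fun n : ℕ => meanWeight (t / n)) Filter.atTop (𝓝 1) := by
  obtain ⟨K, hK⟩ := exists_meanWeight_bounds
  have hdiv := tendsto_const_div_atTop_nhds_zero_nat t
  have hsq : Filter.Tendsto (fun n : ℕ => (1 - meanWeight (t / n)) ^ 2) Filter.atTop (𝓝 0) := by
    refine squeeze_zero' (.of_forall fun n => sq_nonneg _) ?_
      (by simpa using (hdiv.pow 2).const_mul K)
    filter_upwards [eventually_div_mem_Ioc ht] with n hn using (hK _ hn).1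
  have habs : Filter.Tendsto (fun n : ℕ => |1 - meanWeight (t / n)|) Filter.atTop (𝓝 0) := by
    simpa [sqrt_sq_eq_abs] using hsq.sqrt
  simpa using (tendsto_zero_iff_abs_tendsto_zero _).2 habs |>.const_sub 1

lemma tendsto_integral_stepWeight_sq_div_pow {t : ℝ} (ht : 0 < t) :
    Filter.Tendsto
      (fun n : ℕ => ((∫ x, stepWeight (t / n) x ^ 2
        ∂gaussianReal (-(t / n) / 2) (t / n).toNNReal) / meanWeight (t / n) ^ 2) ^ n)
      Filter.atTop (𝓝 1) := by
  obtain ⟨K, hK⟩ := exists_meanWeight_bounds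
  have hdiv := tendsto_const_div_atTop_nhds_zero_nat t
  have hbound : Filter.Tendsto (fun n : ℕ => K * t * (t / n) / meanWeight (t / n) ^ 2)
      Filter.atTop (𝓝 0) := by
    simpa [Pi.div_def] using
      (hdiv.const_mul (K * t)).div ((tendsto_meanWeight ht).pow 2) (by simp)
  have hexcess : Filter.Tendsto
      (fun n : ℕ => n * ((∫ x, stepWeight (t / n) x ^ 2
        ∂gaussianReal (-(t / n) / 2) (t / n).toNNReal) / meanWeight (t / n) ^ 2 - 1))
      Filter.atTop (𝓝 0) := by
    refine squeeze_zero' ?_ ?_ hbound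
    all_goals
      filter_upwards [eventually_div_mem_Ioc ht, Filter.eventually_gt_atTop 0] with n hn hn0
      have hp := meanWeight_pos hn.1
    · refine mul_nonneg n.cast_nonneg (sub_nonneg.2 ((one_le_div (by positivity)).2 ?_))
      exact sq_integral_le_integral_sq (memLp_stepWeight hn.1 2 _)
    · rw [div_sub_one (by positivity), ← mul_div_assoc]
      refine div_le_div_of_nonneg_right ?_ (by positivity)
      calc (n : ℝ) * _ ≤ n * (K * (t / n) ^ 2) := by
            gcongr
            exact (hK _ hn).2
        _ = K * t * (t / n) := by
            field_simp
  simpa using tendsto_one_add_pow_exp_of_tendsto hexcess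

end StepWeightEstimates

section Grid

open scoped Topology

/-- The approximation of `∫ exp β` over `[0, n * h]` on a grid of mesh `h`, where `exp β` on a cell
is replaced by the geometric mean of its values at the two end points. -/
def gridArea (β : ℝ → ℝ) (h : ℝ) (n : ℕ) : ℝ :=
  ∑ j ∈ Finset.range n, h * exp ((β (j * h) + β ((j + 1) * h)) / 2)

/-- The discretised pair `(M, A)` along the path `β = log M`, after `n` steps of length `h`. -/
def gridState (β : ℝ → ℝ) (h : ℝ) (n : ℕ) : ℝ × ℝ :=
  (exp (β (n * h)), gridArea β h n)

/-- The total weight of the path `β` that turns its first `n` Gaussian steps into hyperbolic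
ones. -/
def gridWeight (β : ℝ → ℝ) (h : ℝ) (n : ℕ) : ℝ :=
  ∏ j ∈ Finset.range n, stepWeight h (β ((j + 1) * h) - β (j * h))

lemma gridState_zero {β : ℝ → ℝ} (hβ : β 0 = 0) (h : ℝ) : gridState β h 0 = (1, 0) := by
  simp [gridState, gridArea, hβ]

lemma gridState_succ (β : ℝ → ℝ) (h : ℝ) (n : ℕ) :
    gridState β h (n + 1) =
      ((gridState β h n).1 * exp (β ((n + 1) * h) - β (n * h)),
        (gridState β h n).2 +
          h * ((gridState β h n).1 * exp ((β ((n + 1) * h) - β (n * h)) / 2))) := by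
  simp only [gridState, gridArea, Finset.sum_range_succ, Nat.cast_add, Nat.cast_one, ← exp_add]
  ring_nf

lemma gridWeight_succ (β : ℝ → ℝ) (h : ℝ) (n : ℕ) :
    gridWeight β h (n + 1) = gridWeight β h n * stepWeight h (β ((n + 1) * h) - β (n * h)) :=
  Finset.prod_range_succ _ _

lemma gridWeight_nonneg (β : ℝ → ℝ) (h : ℝ) (n : ℕ) : 0 ≤ gridWeight β h n :=
  Finset.prod_nonneg fun _ _ => (stepWeight_pos _ _).le

lemma dist_riemann_sum_integral_le {f : ℝ → ℝ} (hf : Continuous f) {t ε : ℝ} (ht : 0 ≤ t) {n : ℕ}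
    (hn : 0 < n) {ζ : ℕ → ℝ}
    (hζ : ∀ j < n, ∀ x ∈ Icc (j * (t / n)) ((j + 1) * (t / n)), dist (f (ζ j)) (f x) ≤ ε) :
    dist (∑ j ∈ Finset.range n, t / n * f (ζ j)) (∫ x in (0 : ℝ)..t, f x) ≤ t * ε := by
  have hn' : (0 : ℝ) < n := Nat.cast_pos.2 hn
  have hcell : ∀ j : ℕ, (j : ℝ) * (t / n) ≤ (j + 1) * (t / n) := fun j => by gcongr; linarith
  have hint : ∀ a b, IntervalIntegrable f volume a b := hf.intervalIntegrable
  have hsum : ∑ j ∈ Finset.range n, ∫ x in (j * (t / n))..((j + 1) * (t / n)), f x =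
      ∫ x in (0 : ℝ)..t, f x := by
    have := intervalIntegral.sum_integral_adjacent_intervals (f := f) (μ := volume) (n := n)
      (a := fun j => j * (t / n)) fun j _ => hint _ _
    simpa [mul_div_cancel₀ t hn'.ne'] using this
  calc dist (∑ j ∈ Finset.range n, t / n * f (ζ j)) (∫ x in (0 : ℝ)..t, f x)
      ≤ ∑ j ∈ Finset.range n, dist (t / n * f (ζ j))
          (∫ x in (j * (t / n))..((j + 1) * (t / n)), f x) := hsum ▸ dist_sum_sum_le _ _ _
    _ ≤ ∑ _j ∈ Finset.range n, t / n * ε := by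
        refine Finset.sum_le_sum fun j hj => ?_
        have hconst : t / n * f (ζ j) = ∫ _x in (j * (t / n))..((j + 1) * (t / n)), f (ζ j) := by
          rw [intervalIntegral.integral_const, smul_eq_mul]
          ring
        rw [hconst, dist_eq_norm, ← intervalIntegral.integral_sub (by simp) (hint _ _)]
        refine (intervalIntegral.norm_integral_le_of_norm_le_const (C := ε) fun x hx =>
          ?_).trans_eq ?_
        · rw [uIoc_of_le (hcell j)] at hx
          exact hζ j (Finset.mem_range.1 hj) x (Ioc_subset_Icc_self hx)
        · rw [abs_of_nonneg (sub_nonneg.2 (hcell j))]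
          ring
    _ = t * ε := by
        rw [Finset.sum_const, Finset.card_range, nsmul_eq_mul]
        field_simp

lemma tendsto_riemann_sum {f : ℝ → ℝ} (hf : Continuous f) {t : ℝ} (ht : 0 < t) {ζ : ℕ → ℕ → ℝ}
    (hζ : ∀ n j : ℕ, ζ n j ∈ Icc (j * (t / n)) ((j + 1) * (t / n))) :
    Filter.Tendsto (fun n : ℕ => ∑ j ∈ Finset.range n, t / n * f (ζ n j)) Filter.atTop
      (𝓝 (∫ x in (0 : ℝ)..t, f x)) := by
  refine Metric.tendsto_nhds.2 fun ε hε => ?_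
  obtain ⟨δ, hδ, hfδ⟩ := Metric.uniformContinuousOn_iff_le.1
    (isCompact_Icc.uniformContinuousOn_of_continuous (s := Icc 0 t) hf.continuousOn)
    (ε / (2 * t)) (by positivity)
  filter_upwards [(tendsto_const_div_atTop_nhds_zero_nat t).eventually_le_const hδ,
    Filter.eventually_gt_atTop 0] with n hnδ hn
  have hn' : (0 : ℝ) < n := Nat.cast_pos.2 hn
  have hmem : ∀ j < n, ∀ x ∈ Icc (j * (t / n)) ((j + 1) * (t / n)), x ∈ Icc 0 t :=
    fun j hj x hx => by
      refine ⟨(by positivity : (0 : ℝ) ≤ j * (t / n)).trans hx.1, hx.2.trans ?_⟩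
      have : (j + 1 : ℝ) ≤ n := by exact_mod_cast hj
      calc (j + 1) * (t / n) ≤ n * (t / n) := by gcongr
        _ = t := mul_div_cancel₀ t hn'.ne'
  refine (dist_riemann_sum_integral_le hf ht.le hn fun j hj x hx =>
    hfδ _ (hmem j hj _ (hζ n j)) x (hmem j hj x hx) ?_).trans_lt ?_
  · refine (Real.dist_le_of_mem_Icc (hζ n j) hx).trans ?_
    linarith
  · field_simp
    norm_num

lemma tendsto_gridArea {β : ℝ → ℝ} (hβ : Continuous β) {t : ℝ} (ht : 0 < t) :
    Filter.Tendsto (fun n : ℕ => gridArea β (t / n) n) Filter.atTop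
      (𝓝 (∫ s in (0 : ℝ)..t, exp (β s))) := by
  have hmid : ∀ n j : ℕ, ∃ s ∈ Icc (j * (t / n)) ((j + 1) * (t / n)),
      β s = (β (j * (t / n)) + β ((j + 1) * (t / n))) / 2 := fun n j => by
    have hcell : j * (t / n) ≤ (j + 1) * (t / n) := by
      gcongr
      linarith
    rw [← uIcc_of_le hcell]
    apply intermediate_value_uIcc hβ.continuousOn
    rw [mem_uIcc]
    rcases le_total (β (j * (t / n))) (β ((j + 1) * (t / n))) with hle | hle
    · exact .inl ⟨by linarith, by linarith⟩
    · exact .inr ⟨by linarith, by linarith⟩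
  choose ζ hζ hζβ using hmid
  refine (tendsto_riemann_sum (continuous_exp.comp hβ) ht hζ).congr fun n => ?_
  simp only [gridArea, ← hζβ, Function.comp_apply]

lemma tendsto_gridState {β : ℝ → ℝ} (hβ : Continuous β) {t : ℝ} (ht : 0 < t) :
    Filter.Tendsto (fun n : ℕ => gridState β (t / n) n) Filter.atTop
      (𝓝 (exp (β t), ∫ s in (0 : ℝ)..t, exp (β s))) := by
  refine Filter.Tendsto.prodMk_nhds (tendsto_const_nhds.congr' ?_) (tendsto_gridArea hβ ht)
  filter_upwards [Filter.eventually_ne_atTop 0] with n hn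
  rw [mul_div_cancel₀ t (Nat.cast_ne_zero.2 hn)]

end Grid

section CallPrice

variable {Ω : Type*} [MeasurableSpace Ω] {μ : Measure Ω} {X : Ω → ℝ} {a : ℝ}

lemma hasDerivAt_max_sub_zero {x : ℝ} (hx : x ≠ a) :
    HasDerivAt (fun b => max (x - b) 0) (-(Ioi a).indicator 1 x) a := by
  rcases lt_or_gt_of_ne hx with h | h
  · rw [indicator_of_notMem (notMem_Ioi.2 h.le), neg_zero]
    refine (hasDerivAt_const a 0).congr_of_eventuallyEq ?_
    filter_upwards [Ioi_mem_nhds h] with b hb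
    exact max_eq_right (sub_nonpos.2 (le_of_lt hb))
  · rw [indicator_of_mem (mem_Ioi.2 h), Pi.one_apply]
    refine ((hasDerivAt_id a).const_sub x).congr_of_eventuallyEq ?_
    filter_upwards [Iio_mem_nhds h] with b hb
    exact max_eq_left (sub_nonneg.2 (le_of_lt hb))

lemma lipschitzWith_max_sub_zero (x : ℝ) : LipschitzWith 1 fun b => max (x - b) 0 :=
  ((LipschitzWith.const x).sub .id).max_const 0 |>.weaken (by simp)

lemma hasDerivAt_integral_max_sub_zero [IsFiniteMeasure μ] (hX : Integrable X μ)
    (ha : μ {ω | X ω = a} = 0) :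
    HasDerivAt (fun b => ∫ ω, max (X ω - b) 0 ∂μ) (-μ.real {ω | a < X ω}) a := by
  have hne : ∀ᵐ ω ∂μ, X ω ≠ a := by simpa [ae_iff] using ha
  have hderiv := (hasDerivAt_integral_of_dominated_loc_of_lip (F := fun b ω => max (X ω - b) 0)
    (F' := fun ω => -(Ioi a).indicator (1 : ℝ → ℝ) (X ω)) (bound := fun _ => 1)
    Filter.univ_mem
      (.of_forall fun b => (hX.sub (integrable_const b)).pos_part.aestronglyMeasurable)
    (hX.sub (integrable_const a)).pos_part
    ((measurable_one.indicator measurableSet_Ioi).comp_aemeasurable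
      hX.aemeasurable).neg.aestronglyMeasurable
    (.of_forall fun ω => by simpa using lipschitzWith_max_sub_zero (X ω))
    (integrable_const 1) (hne.mono fun ω hω => hasDerivAt_max_sub_zero hω)).2
  refine hderiv.congr_deriv ?_
  rw [integral_neg]
  congr 1
  refine (integral_indicator₀ (f := 1)
    (nullMeasurableSet_lt aemeasurable_const hX.aemeasurable)).trans ?_
  simp

lemma integral_max_sub_zero_eq_add [IsProbabilityMeasure μ] (hX : Integrable X μ) (a : ℝ) :
    ∫ ω, max (X ω - a) 0 ∂μ = ∫ ω, X ω ∂μ - a + ∫ ω, max (a - X ω) 0 ∂μ := by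
  have hparity : ∀ x, max (x - a) 0 = x - a + max (a - x) 0 := fun x => by
    rw [← max_add_add_left, add_zero, sub_add_sub_cancel', sub_self, max_comm]
  simp only [hparity]
  rw [integral_add (f := fun ω => X ω - a) (g := fun ω => max (a - X ω) 0)
    (hX.sub (integrable_const a)) ((integrable_const a).sub hX).pos_part,
    integral_sub hX (integrable_const a), integral_const, probReal_univ, one_smul]

lemma hasDerivAt_const_div (c : ℝ) {x : ℝ} (hx : x ≠ 0) :
    HasDerivAt (fun y => c / y) (-c / x ^ 2) x := by
  simpa [div_eq_mul_inv] using (hasDerivAt_inv hx).const_mul c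

end CallPrice

lemma A_nonneg {Ω : Type*} (B : ℝ → Ω → ℝ) {t : ℝ} (ht : 0 ≤ t) (ω : Ω) : 0 ≤ A B t ω :=
  intervalIntegral.integral_nonneg ht fun _ _ => (exp_pos _).le

section Brownian

open scoped ENNReal Topology

/-- The path of `log M`. -/
def driftedPath (B : ℝ → Ω → ℝ) (ω : Ω) (s : ℝ) : ℝ := B s ω - s / 2

namespace IsBrownianMotion

variable {P B}

lemma driftedPath_zero (hB : IsBrownianMotion P B) (ω : Ω) : driftedPath B ω 0 = 0 := by
  simp [driftedPath, hB.start]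

lemma continuous_driftedPath (hB : IsBrownianMotion P B) (ω : Ω) :
    Continuous (driftedPath B ω) :=
  (hB.continuous_paths ω).sub (continuous_id.div_const 2)

lemma measurable_driftedPath (hB : IsBrownianMotion P B) (s : ℝ) :
    Measurable fun ω => driftedPath B ω s :=
  (hB.measurable s).sub_const _

lemma measurable_driftedPath_sub (hB : IsBrownianMotion P B) (s u : ℝ) :
    Measurable fun ω => driftedPath B ω s - driftedPath B ω u :=
  (hB.measurable_driftedPath s).sub (hB.measurable_driftedPath u)

lemma iIndepFun_driftedPath_sub (hB : IsBrownianMotion P B) {h : ℝ} (hh : 0 ≤ h) :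
    iIndepFun (fun (j : ℕ) ω => driftedPath B ω ((j + 1) * h) - driftedPath B ω (j * h)) P := by
  have hmono : Monotone fun j : ℕ => (j : ℝ) * h := fun i j hij => by
    simp only
    gcongr
  refine ((hB.indep_increments _ hmono (by simp)).comp (fun _ x => x - h / 2)
    fun _ => by fun_prop).congr fun j => .of_forall fun ω => ?_
  simp only [driftedPath, Function.comp_apply, Nat.cast_succ]
  ring

lemma map_driftedPath_sub (hB : IsBrownianMotion P B) {h : ℝ} (hh : 0 ≤ h) (j : ℕ) :
    P.map (fun ω => driftedPath B ω ((j + 1) * h) - driftedPath B ω (j * h)) =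
      gaussianReal (-h / 2) h.toNNReal := by
  have hle : (j : ℝ) * h ≤ (j + 1) * h := by
    gcongr
    linarith
  have hcomp : (fun ω => driftedPath B ω ((j + 1) * h) - driftedPath B ω (j * h)) =
      (fun x => x - h / 2) ∘ fun ω => B ((j + 1) * h) ω - B (j * h) ω := by
    ext ω
    simp only [driftedPath, Function.comp_apply]
    ring
  have hmeas : Measurable fun ω => B ((j + 1) * h) ω - B (j * h) ω :=
    (hB.measurable _).sub (hB.measurable _)
  rw [hcomp, ← Measure.map_map (by fun_prop) hmeas,
    hB.gaussian_increments _ _ (by positivity) hle, gaussianReal_map_sub_const]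
  congr 1
  · ring
  · congr 1
    ring

lemma measurable_and_indepFun_grid (hB : IsBrownianMotion P B) {h : ℝ} (hh : 0 ≤ h) (n : ℕ) :
    Measurable (fun ω => (gridState (driftedPath B ω) h n, gridWeight (driftedPath B ω) h n)) ∧
      IndepFun (fun ω => (gridState (driftedPath B ω) h n, gridWeight (driftedPath B ω) h n))
        (fun ω => driftedPath B ω ((n + 1) * h) - driftedPath B ω (n * h)) P := by
  refine measurable_and_indepFun_of_recursion (hB.iIndepFun_driftedPath_sub hh)
    (fun j => hB.measurable_driftedPath_sub _ _)
    (Z := fun n ω => (gridState (driftedPath B ω) h n, gridWeight (driftedPath B ω) h n))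
    (g := fun p : ((ℝ × ℝ) × ℝ) × ℝ =>
      ((p.1.1.1 * exp p.2, p.1.1.2 + h * (p.1.1.1 * exp (p.2 / 2))), p.1.2 * stepWeight h p.2))
    (z₀ := ((1, 0), 1)) (by fun_prop) (fun ω => ?_) (fun k ω => ?_) n
  · rw [gridState_zero (hB.driftedPath_zero ω), gridWeight, Finset.prod_range_zero]
  · rw [gridState_succ, gridWeight_succ]

lemma measurable_gridState (hB : IsBrownianMotion P B) {h : ℝ} (hh : 0 ≤ h) (n : ℕ) :
    Measurable fun ω => gridState (driftedPath B ω) h n :=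
  (hB.measurable_and_indepFun_grid hh n).1.fst

lemma measurable_gridWeight (hB : IsBrownianMotion P B) {h : ℝ} (hh : 0 ≤ h) (n : ℕ) :
    Measurable fun ω => gridWeight (driftedPath B ω) h n :=
  (hB.measurable_and_indepFun_grid hh n).1.snd

lemma lintegral_gridWeight_mul (hB : IsBrownianMotion P B) {h : ℝ} (hh : 0 < h) (n : ℕ)
    {F : ℝ × ℝ → ℝ≥0∞} (hF : Measurable F) :
    ∫⁻ ω, ENNReal.ofReal (gridWeight (driftedPath B ω) h n) *
        F (gridState (driftedPath B ω) h n) ∂P =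
      hyperbolicConst h ^ n * (hyperbolicStep h)^[n] F (1, 0) := by
  have := hB.isProbabilityMeasure
  induction n generalizing F with
  | zero => simp [gridWeight, gridState_zero (hB.driftedPath_zero _)]
  | succ n ih =>
    obtain ⟨hmeas, hindep⟩ := hB.measurable_and_indepFun_grid hh.le n
    have hsplit := lintegral_prodMk_of_indepFun hmeas (hB.measurable_driftedPath_sub _ _) hindep
      (F := fun p => ENNReal.ofReal p.1.2 * (ENNReal.ofReal (stepWeight h p.2) *
        F (p.1.1.1 * exp p.2, p.1.1.2 + h * (p.1.1.1 * exp (p.2 / 2))))) (by fun_prop)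
    calc ∫⁻ ω, ENNReal.ofReal (gridWeight (driftedPath B ω) h (n + 1)) *
            F (gridState (driftedPath B ω) h (n + 1)) ∂P
        = ∫⁻ ω, ∫⁻ x, ENNReal.ofReal (gridWeight (driftedPath B ω) h n) *
            (ENNReal.ofReal (stepWeight h x) *
              F ((gridState (driftedPath B ω) h n).1 * exp x, (gridState (driftedPath B ω) h n).2 +
                h * ((gridState (driftedPath B ω) h n).1 * exp (x / 2))))
            ∂P.map (fun ω => driftedPath B ω ((n + 1) * h) - driftedPath B ω (n * h)) ∂P := by
          simp only [gridWeight_succ, gridState_succ, mul_assoc,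
            ENNReal.ofReal_mul (gridWeight_nonneg _ _ _)]
          exact hsplit
      _ = ∫⁻ ω, hyperbolicConst h * (ENNReal.ofReal (gridWeight (driftedPath B ω) h n) *
            hyperbolicStep h F (gridState (driftedPath B ω) h n)) ∂P := by
          refine lintegral_congr fun ω => ?_
          rw [hB.map_driftedPath_sub hh.le, lintegral_const_mul' _ _ ENNReal.ofReal_ne_top,
            lintegral_stepWeight_mul hh hF, mul_left_comm]
      _ = hyperbolicConst h ^ (n + 1) * (hyperbolicStep h)^[n + 1] F (1, 0) := by
          rw [lintegral_const_mul' _ _ (by exact ENNReal.ofReal_ne_top),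
            ih (measurable_hyperbolicStep h hF), pow_succ', mul_assoc, Function.iterate_succ_apply]

lemma lintegral_gridWeight_mul_mobiusDensity_mul (hB : IsBrownianMotion P B) {a h : ℝ}
    (ha : 0 < a) (hh : 0 < h) (n : ℕ) {F : ℝ × ℝ → ℝ≥0∞} (hF : Measurable F) :
    ∫⁻ ω, ENNReal.ofReal (gridWeight (driftedPath B ω) h n) *
        (ENNReal.ofReal (mobiusDensity a (gridState (driftedPath B ω) h n)) *
          F (mobiusShift a (gridState (driftedPath B ω) h n))) ∂P =
      ∫⁻ ω, ENNReal.ofReal (gridWeight (driftedPath B ω) h n) *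
        F (gridState (driftedPath B ω) h n) ∂P := by
  rw [hB.lintegral_gridWeight_mul hh n hF,
    hB.lintegral_gridWeight_mul hh n (F := fun z => ENNReal.ofReal (mobiusDensity a z) *
      F (mobiusShift a z)) (by fun_prop),
    hyperbolicStep_iterate_mobiusDensity_mul hh]
  simp only [mobiusDensity_start ha, mobiusShift_start ha.ne', ENNReal.ofReal_one, one_mul]

lemma measurable_M (hB : IsBrownianMotion P B) (t : ℝ) : Measurable (M B t) :=
  (hB.measurable_driftedPath t).exp

lemma tendsto_gridState_driftedPath (hB : IsBrownianMotion P B) {t : ℝ} (ht : 0 < t) (ω : Ω) :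
    Filter.Tendsto (fun n : ℕ => gridState (driftedPath B ω) (t / n) n) Filter.atTop
      (𝓝 (M B t ω, A B t ω)) :=
  tendsto_gridState (hB.continuous_driftedPath ω) ht

lemma measurable_A (hB : IsBrownianMotion P B) {t : ℝ} (ht : 0 < t) : Measurable (A B t) :=
  measurable_of_tendsto_metrizable
    (fun n : ℕ => (hB.measurable_gridState (div_nonneg ht.le n.cast_nonneg) n).snd)
    (tendsto_pi_nhds.2 fun ω => (hB.tendsto_gridState_driftedPath ht ω).snd_nhds)

lemma memLp_gridWeight_div (hB : IsBrownianMotion P B) {h : ℝ} (hh : 0 < h) (n : ℕ) (c : ℝ) :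
    MemLp (fun ω => gridWeight (driftedPath B ω) h n / c) 2 P := by
  have := hB.isProbabilityMeasure
  have hW : MemLp (fun ω => gridWeight (driftedPath B ω) h n) 2 P :=
    .of_bound (hB.measurable_gridWeight hh.le n).aestronglyMeasurable 1 <| ae_of_all _ fun ω => by
      rw [norm_eq_abs, abs_of_nonneg (gridWeight_nonneg _ _ _)]
      exact Finset.prod_le_one (fun _ _ => (stepWeight_pos _ _).le)
        fun _ _ => stepWeight_le_one hh _
  simpa only [div_eq_mul_inv] using hW.mul_const c⁻¹

lemma integral_gridWeight_div_sub_one_sq (hB : IsBrownianMotion P B) {h : ℝ} (hh : 0 < h)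
    (n : ℕ) :
    ∫ ω, (gridWeight (driftedPath B ω) h n / meanWeight h ^ n - 1) ^ 2 ∂P =
      ((∫ x, stepWeight h x ^ 2 ∂gaussianReal (-h / 2) h.toNNReal) / meanWeight h ^ 2) ^ n - 1 := by
  have := hB.isProbabilityMeasure
  have hindep : iIndepFun (fun (i : Fin n) ω => stepWeight h
      (driftedPath B ω ((i + 1) * h) - driftedPath B ω (i * h)) / meanWeight h) P :=
    ((hB.iIndepFun_driftedPath_sub hh.le).precomp Fin.val_injective).comp
      (fun _ x => stepWeight h x / meanWeight h) fun _ => by fun_prop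
  have hlaw : ∀ {f : ℝ → ℝ}, Measurable f → ∀ j : ℕ,
      ∫ ω, f (driftedPath B ω ((j + 1) * h) - driftedPath B ω (j * h)) ∂P =
        ∫ x, f x ∂gaussianReal (-h / 2) h.toNNReal := fun hf j => by
    rw [← hB.map_driftedPath_sub hh.le j,
      integral_map (hB.measurable_driftedPath_sub _ _).aemeasurable hf.aestronglyMeasurable]
  have hprod := integral_prod_sub_one_sq hindep (fun i => ?_) (fun i => ?_)
  · simp only [div_pow, integral_div, hlaw (f := fun x => stepWeight h x ^ 2) (by fun_prop),
      Finset.prod_const, Finset.card_univ, Fintype.card_fin, Finset.prod_div_distrib] at hprod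
    simpa only [gridWeight, Finset.prod_range, div_pow] using hprod
  · have hmem :=
      (memLp_stepWeight hh 2 (gaussianReal (-h / 2) h.toNNReal)).mul_const (meanWeight h)⁻¹
    rw [← hB.map_driftedPath_sub hh.le i] at hmem
    exact hmem.comp_of_map (hB.measurable_driftedPath_sub _ _).aemeasurable
  · rw [integral_div, hlaw (measurable_stepWeight h)]
    exact div_self (meanWeight_pos hh).ne'

lemma tendsto_integral_gridWeight_div_mul (hB : IsBrownianMotion P B) {t C : ℝ} (ht : 0 < t)
    {F : ℝ × ℝ → ℝ} (hF : Measurable F) (hC : ∀ z, |F z| ≤ C)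
    (hcont : ∀ z : ℝ × ℝ, z.1 ≠ 0 → ContinuousAt F z) :
    Filter.Tendsto (fun n : ℕ => ∫ ω, gridWeight (driftedPath B ω) (t / (n + 1 : ℕ)) (n + 1) /
        meanWeight (t / (n + 1 : ℕ)) ^ (n + 1) *
          F (gridState (driftedPath B ω) (t / (n + 1 : ℕ)) (n + 1)) ∂P)
      Filter.atTop (𝓝 (∫ ω, F (M B t ω, A B t ω) ∂P)) := by
  have := hB.isProbabilityMeasure
  have hstep : ∀ n : ℕ, 0 < t / (n + 1 : ℕ) := fun n => by positivity
  refine tendsto_integral_mul_of_tendsto_integral_sub_one_sq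
    (fun n => hB.memLp_gridWeight_div (hstep n) _ _) ?_
    (fun n => (hF.comp (hB.measurable_gridState (hstep n).le _)).aestronglyMeasurable)
    (fun n ω => hC _) (fun ω => ?_)
  · simp only [hB.integral_gridWeight_div_sub_one_sq (hstep _)]
    simpa using ((tendsto_integral_stepWeight_sq_div_pow ht).comp
      (Filter.tendsto_add_atTop_nat 1)).sub_const 1
  · exact (hcont _ (exp_ne_zero _)).tendsto.comp
      ((hB.tendsto_gridState_driftedPath ht ω).comp (Filter.tendsto_add_atTop_nat 1))

lemma integral_gridWeight_div_mul_mobiusDensity_mul (hB : IsBrownianMotion P B) {a h : ℝ}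
    (ha : 0 < a) (hh : 0 < h) (n : ℕ) {F : ℝ × ℝ → ℝ} (hF : Measurable F) (h0 : ∀ z, 0 ≤ F z) :
    ∫ ω, gridWeight (driftedPath B ω) h n / meanWeight h ^ n *
        (mobiusDensity a (gridState (driftedPath B ω) h n) *
          F (mobiusShift a (gridState (driftedPath B ω) h n))) ∂P =
      ∫ ω, gridWeight (driftedPath B ω) h n / meanWeight h ^ n *
        F (gridState (driftedPath B ω) h n) ∂P := by
  have hstate := hB.measurable_gridState hh.le n
  have hweight := hB.measurable_gridWeight hh.le n
  simp only [div_mul_eq_mul_div, integral_div]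
  congr 1
  rw [integral_eq_lintegral_of_nonneg_ae, integral_eq_lintegral_of_nonneg_ae]
  · simp only [ENNReal.ofReal_mul (gridWeight_nonneg _ _ _),
      ENNReal.ofReal_mul (mobiusDensity_nonneg _ _)]
    rw [hB.lintegral_gridWeight_mul_mobiusDensity_mul ha hh n hF.ennreal_ofReal]
  · exact ae_of_all _ fun ω => mul_nonneg (gridWeight_nonneg _ _ _) (h0 _)
  · exact Measurable.aestronglyMeasurable (by fun_prop)
  · exact ae_of_all _ fun ω => mul_nonneg (gridWeight_nonneg _ _ _)
      (mul_nonneg (mobiusDensity_nonneg _ _) (h0 _))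
  · exact Measurable.aestronglyMeasurable (by fun_prop)

lemma integral_mobiusDensity_mul (hB : IsBrownianMotion P B) {t a C : ℝ} (ht : 0 < t)
    (ha : 0 < a) {F : ℝ × ℝ → ℝ} (hF : Continuous F) (h0 : ∀ z, 0 ≤ F z) (hC : ∀ z, F z ≤ C) :
    ∫ ω, mobiusDensity a (M B t ω, A B t ω) * F (mobiusShift a (M B t ω, A B t ω)) ∂P =
      ∫ ω, F (M B t ω, A B t ω) ∂P := by
  have habs : ∀ z, |F z| ≤ C := fun z => (abs_of_nonneg (h0 z)).trans_le (hC z)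
  have hlim := hB.tendsto_integral_gridWeight_div_mul ht hF.measurable habs
    fun z _ => hF.continuousAt
  have hlim' := hB.tendsto_integral_gridWeight_div_mul ht (C := exp (2 / a) * C)
    (F := fun z => mobiusDensity a z * F (mobiusShift a z)) (by fun_prop) (fun z => ?_)
    fun z hz => continuousAt_mobiusDensity_mul hF habs hz
  · refine tendsto_nhds_unique (hlim'.congr fun n => ?_) hlim
    exact hB.integral_gridWeight_div_mul_mobiusDensity_mul ha (by positivity) _ hF.measurable h0
  · rw [abs_mul, abs_of_nonneg (mobiusDensity_nonneg a z)]
    gcongr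
    exacts [mobiusDensity_le a z, habs _]

lemma measurable_prodMk_M_A (hB : IsBrownianMotion P B) {t : ℝ} (ht : 0 < t) :
    Measurable fun ω => (M B t ω, A B t ω) :=
  (hB.measurable_M t).prodMk (hB.measurable_A ht)

lemma map_mobiusShift_withDensity (hB : IsBrownianMotion P B) {t a : ℝ} (ht : 0 < t)
    (ha : 0 < a) :
    ((P.map fun ω => (M B t ω, A B t ω)).withDensity
      fun z => ENNReal.ofReal (mobiusDensity a z)).map (mobiusShift a) =
        P.map fun ω => (M B t ω, A B t ω) := by
  have := hB.isProbabilityMeasure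
  have hMA := hB.measurable_prodMk_M_A ht
  have := Measure.isProbabilityMeasure_map (μ := P) hMA.aemeasurable
  refine (ext_of_forall_lintegral_eq_of_IsFiniteMeasure fun F => ?_).symm
  have hF : Measurable fun z => (F z : ℝ≥0∞) := F.continuous.measurable.coe_nnreal_ennreal
  have hFr : Measurable fun z => (F z : ℝ) := F.continuous.measurable.coe_nnreal_real
  have hC : ∀ z, (F z : ℝ) ≤ nndist F 0 := fun z => BoundedContinuousFunction.NNReal.upper_bound F z
  have hint : Integrable (fun ω => (F (M B t ω, A B t ω) : ℝ)) P :=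
    .of_bound (hFr.comp hMA).aestronglyMeasurable _ (ae_of_all _ fun ω => by simpa using hC _)
  have hint' : Integrable (fun ω => mobiusDensity a (M B t ω, A B t ω) *
      F (mobiusShift a (M B t ω, A B t ω))) P := by
    refine .of_bound (Measurable.aestronglyMeasurable (by fun_prop)) (exp (2 / a) * nndist F 0)
      (ae_of_all _ fun ω => ?_)
    rw [norm_mul, norm_of_nonneg (mobiusDensity_nonneg _ _), NNReal.norm_eq]
    gcongr
    exacts [mobiusDensity_le _ _, hC _]
  have key := congrArg ENNReal.ofReal <| hB.integral_mobiusDensity_mul ht ha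
    (F := fun z => F z) (NNReal.continuous_coe.comp F.continuous) (fun z => (F z).2) hC
  rw [ofReal_integral_eq_lintegral_ofReal hint' (ae_of_all _ fun ω =>
      mul_nonneg (mobiusDensity_nonneg _ _) (F _).2),
    ofReal_integral_eq_lintegral_ofReal hint (ae_of_all _ fun ω => (F _).2)] at key
  rw [lintegral_map hF (measurable_mobiusShift a),
    lintegral_withDensity_eq_lintegral_mul _ (by fun_prop) (by fun_prop),
    lintegral_map hF hMA, lintegral_map (by fun_prop) hMA]
  simpa [ENNReal.ofReal_mul (mobiusDensity_nonneg _ _)] using key.symm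

lemma lintegral_mobiusDensity_mul (hB : IsBrownianMotion P B) {t a : ℝ} (ht : 0 < t)
    (ha : 0 < a) {F : ℝ × ℝ → ℝ≥0∞} (hF : Measurable F) :
    ∫⁻ ω, ENNReal.ofReal (mobiusDensity a (M B t ω, A B t ω)) *
        F (mobiusShift a (M B t ω, A B t ω)) ∂P =
      ∫⁻ ω, F (M B t ω, A B t ω) ∂P := by
  have hMA := hB.measurable_prodMk_M_A ht
  rw [← lintegral_map hF hMA, ← hB.map_mobiusShift_withDensity ht ha,
    lintegral_map hF (measurable_mobiusShift a),
    lintegral_withDensity_eq_lintegral_mul _ (by fun_prop) (by fun_prop),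
    lintegral_map (by fun_prop) hMA]
  rfl

lemma lintegral_exp_mul_comp (hB : IsBrownianMotion P B) {t a : ℝ} (ht : 0 < t) (ha : 0 < a)
    {f : ℝ → ℝ≥0∞} (hf : Measurable f) :
    ∫⁻ ω, ENNReal.ofReal (exp (2 * M B t ω / (a + A B t ω) - 2 / a)) *
        f (a * A B t ω / (a + A B t ω)) ∂P =
      ∫⁻ ω, (Iio a).indicator f (A B t ω) ∂P := by
  rw [← hB.lintegral_mobiusDensity_mul ht ha
    (F := fun z => ENNReal.ofReal (exp (2 * z.1 / (a + z.2) - 2 / a)) * f (a * z.2 / (a + z.2)))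
    (by fun_prop)]
  exact lintegral_congr fun ω => mobiusDensity_mul_mobiusShift ha (exp_pos _) f

lemma lintegral_exp_two_mul_M_div_sub (hB : IsBrownianMotion P B) {t a : ℝ} (ht : 0 < t)
    (ha : 0 < a) :
    ∫⁻ ω, ENNReal.ofReal (exp (2 * M B t ω / (a + A B t ω) - 2 / a)) ∂P =
      P {ω | A B t ω < a} := by
  have key := hB.lintegral_exp_mul_comp ht ha (f := 1) measurable_one
  simp only [Pi.one_apply, mul_one] at key
  rw [key, ← lintegral_map (measurable_one.indicator measurableSet_Iio) (hB.measurable_A ht),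
    lintegral_indicator_one measurableSet_Iio,
    Measure.map_apply (hB.measurable_A ht) measurableSet_Iio]
  rfl

lemma integral_exp_two_mul_M_div (hB : IsBrownianMotion P B) {t a : ℝ} (ht : 0 < t)
    (ha : 0 < a) :
    ∫ ω, exp (2 * M B t ω / (a + A B t ω)) ∂P =
      exp (2 / a) * P.real {ω | A B t ω < a} := by
  have hA := hB.measurable_A ht
  have hM := hB.measurable_M t
  rw [Measure.real, ← hB.lintegral_exp_two_mul_M_div_sub ht ha,
    ← integral_eq_lintegral_of_nonneg_ae (ae_of_all _ fun ω => (exp_pos _).le)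
      (Measurable.aestronglyMeasurable (by fun_prop)), ← integral_const_mul]
  simp only [← exp_add, add_sub_cancel]

lemma integral_inv_mul_exp_two_mul_M_div (hB : IsBrownianMotion P B) {t a : ℝ} (ht : 0 < t)
    (ha : 0 < a) :
    a * ∫ ω, (a + A B t ω)⁻¹ * exp (2 * M B t ω / (a + A B t ω)) ∂P =
      exp (2 / a) * ((∫ ω, max (a - A B t ω) 0 ∂P) / a) := by
  have hA := hB.measurable_A ht
  have hM := hB.measurable_M t
  have hA0 := A_nonneg B ht.le
  have hshift : ∀ x, 0 ≤ x → (a - a * x / (a + x)) / a = a * (a + x)⁻¹ := fun x hx => by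
    field_simp
    ring
  have hput : ∀ x, (Iio a).indicator (fun x => ENNReal.ofReal ((a - x) / a)) x =
      ENNReal.ofReal (max (a - x) 0 / a) := fun x => by
    rcases lt_or_ge x a with hx | hx
    · rw [indicator_of_mem (mem_Iio.2 hx), max_eq_left (sub_nonneg.2 hx.le)]
    · rw [indicator_of_notMem (notMem_Iio.2 hx), max_eq_right (sub_nonpos.2 hx), zero_div,
        ENNReal.ofReal_zero]
  have key := hB.lintegral_exp_mul_comp ht ha (f := fun x => ENNReal.ofReal ((a - x) / a))
    (by fun_prop)
  simp only [hput, hshift _ (hA0 _), ← ENNReal.ofReal_mul (exp_pos _).le] at key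
  rw [← integral_div, integral_eq_lintegral_of_nonneg_ae (f := fun ω => max (a - A B t ω) 0 / a)
      (ae_of_all _ fun ω => by positivity) (Measurable.aestronglyMeasurable (by fun_prop)), ← key,
    ← integral_eq_lintegral_of_nonneg_ae (ae_of_all _ fun ω => ?_)
      (Measurable.aestronglyMeasurable (by fun_prop)), ← integral_const_mul, ← integral_const_mul]
  · congr 1 with ω
    rw [exp_sub]
    field_simp
  · have := hA0 ω
    positivity

lemma measure_setOf_A_le_le_mul (hB : IsBrownianMotion P B) {t a b : ℝ} (ht : 0 < t) (ha : 0 < a)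
    (hab : a < b) :
    P {ω | A B t ω ≤ a} ≤
      ENNReal.ofReal (exp (2 / a - 2 / b)) * P {ω | A B t ω < a} := by
  rw [← hB.lintegral_exp_two_mul_M_div_sub ht ha,
    ← lintegral_const_mul' _ _ ENNReal.ofReal_ne_top]
  calc P {ω | A B t ω ≤ a} ≤ P {ω | A B t ω < b} :=
        measure_mono fun ω (hω : _ ≤ _) => hω.trans_lt hab
    _ = ∫⁻ ω, ENNReal.ofReal (exp (2 * M B t ω / (b + A B t ω) - 2 / b)) ∂P :=
        (hB.lintegral_exp_two_mul_M_div_sub ht (ha.trans hab)).symm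
    _ ≤ _ := lintegral_mono fun ω => by
        have hA0 := A_nonneg B ht.le ω
        have hM0 : 0 < M B t ω := exp_pos _
        have : 2 * M B t ω / (b + A B t ω) ≤ 2 * M B t ω / (a + A B t ω) := by gcongr
        rw [← ENNReal.ofReal_mul (exp_pos _).le, ← exp_add]
        gcongr
        linarith

lemma measure_setOf_A_eq (hB : IsBrownianMotion P B) {t a : ℝ} (ht : 0 < t) (ha : 0 < a) :
    P {ω | A B t ω = a} = 0 := by
  have := hB.isProbabilityMeasure
  have hle : P {ω | A B t ω ≤ a} ≤ P {ω | A B t ω < a} := by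
    have hcont : ContinuousAt (fun b : ℝ => exp (2 / a - 2 / b)) a := by
      fun_prop (disch := exact ha.ne')
    have hlim := ENNReal.Tendsto.mul_const (ENNReal.tendsto_ofReal hcont.tendsto)
      (b := P {ω | A B t ω < a}) (.inr (measure_ne_top _ _))
    rw [sub_self, exp_zero, ENNReal.ofReal_one, one_mul] at hlim
    exact ge_of_tendsto (hlim.mono_left nhdsWithin_le_nhds)
      (Filter.eventually_of_mem (self_mem_nhdsWithin (s := Ioi a))
        fun b hb => hB.measure_setOf_A_le_le_mul ht ha hb)
  have hdiff : {ω | A B t ω = a} = {ω | A B t ω ≤ a} \ {ω | A B t ω < a} := by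
    ext ω
    simp [le_antisymm_iff]
  have hsub : {ω | A B t ω < a} ⊆ {ω | A B t ω ≤ a} := fun ω hω => le_of_lt (α := ℝ) hω
  rw [hdiff, measure_sdiff hsub
    (measurableSet_lt (hB.measurable_A ht) measurable_const).nullMeasurableSet (measure_ne_top _ _)]
  exact tsub_eq_zero_of_le hle

lemma map_eval_eq_gaussianReal (hB : IsBrownianMotion P B) {s : ℝ} (hs : 0 ≤ s) :
    P.map (B s) = gaussianReal 0 s.toNNReal := by
  simpa [hB.start] using hB.gaussian_increments 0 s le_rfl hs

lemma lintegral_M (hB : IsBrownianMotion P B) {s : ℝ} (hs : 0 ≤ s) :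
    ∫⁻ ω, ENNReal.ofReal (M B s ω) ∂P = 1 := by
  have hlaw := hB.map_eval_eq_gaussianReal hs
  have hexp : Integrable (fun ω => exp (1 * B s ω)) P := by
    have := integrable_exp_mul_gaussianReal (μ := 0) (v := s.toNNReal) 1
    rw [← hlaw] at this
    exact this.comp_measurable (hB.measurable s)
  have hM : M B s = fun ω => exp (1 * B s ω) / exp (s / 2) := by
    ext ω
    rw [M, exp_sub, one_mul]
  have hMi : Integrable (M B s) P := hM ▸ hexp.div_const _
  rw [← ofReal_integral_eq_lintegral_ofReal hMi (ae_of_all _ fun ω => (exp_pos _).le), hM,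
    integral_div, ← mgf, mgf_gaussianReal hlaw]
  simp [hs]

lemma measurable_uncurry_M (hB : IsBrownianMotion P B) :
    Measurable (Function.uncurry fun ω s => M B s ω) := by
  have hBm : Measurable fun p : Ω × ℝ => B p.2 p.1 :=
    (measurable_uncurry_of_continuous_of_measurable hB.continuous_paths hB.measurable).comp
      measurable_swap
  exact (hBm.sub (measurable_snd.div_const 2)).exp

lemma ofReal_A_eq_lintegral (hB : IsBrownianMotion P B) {t : ℝ} (ht : 0 ≤ t) (ω : Ω) :
    ENNReal.ofReal (A B t ω) = ∫⁻ s in Ioc 0 t, ENNReal.ofReal (M B s ω) := by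
  rw [A, intervalIntegral.integral_of_le ht]
  exact ofReal_integral_eq_lintegral_ofReal
    (hB.continuous_driftedPath ω).rexp.integrableOn_Ioc (ae_of_all _ fun _ => (exp_pos _).le)

lemma lintegral_A (hB : IsBrownianMotion P B) {t : ℝ} (ht : 0 ≤ t) :
    ∫⁻ ω, ENNReal.ofReal (A B t ω) ∂P = ENNReal.ofReal t := by
  have := hB.isProbabilityMeasure
  simp only [hB.ofReal_A_eq_lintegral ht]
  rw [lintegral_lintegral_swap hB.measurable_uncurry_M.ennreal_ofReal.aemeasurable,
    setLIntegral_congr_fun measurableSet_Ioc fun s hs => hB.lintegral_M hs.1.le]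
  simp

lemma integrable_A (hB : IsBrownianMotion P B) {t : ℝ} (ht : 0 < t) : Integrable (A B t) P := by
  refine ⟨(hB.measurable_A ht).aestronglyMeasurable, ?_⟩
  rw [hasFiniteIntegral_iff_ofReal (ae_of_all _ (A_nonneg B ht.le)), hB.lintegral_A ht.le]
  exact ENNReal.ofReal_lt_top

lemma integral_A (hB : IsBrownianMotion P B) {t : ℝ} (ht : 0 < t) : ∫ ω, A B t ω ∂P = t := by
  rw [integral_eq_lintegral_of_nonneg_ae (ae_of_all _ (A_nonneg B ht.le))
    (hB.measurable_A ht).aestronglyMeasurable, hB.lintegral_A ht.le, ENNReal.toReal_ofReal ht.le]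

lemma hasDerivAt_integral_max_A_sub_zero (hB : IsBrownianMotion P B) {t a : ℝ} (ht : 0 < t)
    (ha : 0 < a) :
    HasDerivAt (fun b => ∫ ω, max (A B t ω - b) 0 ∂P) (P.real {ω | A B t ω < a} - 1) a := by
  have := hB.isProbabilityMeasure
  have hA := hB.measurable_A ht
  have hatom := hB.measure_setOf_A_eq ht ha
  refine (hasDerivAt_integral_max_sub_zero (hB.integrable_A ht) hatom).congr_deriv ?_
  have hlt : P.real {ω | A B t ω < a} = P.real {ω | a < A B t ω}ᶜ := by
    refine measureReal_congr ?_
    filter_upwards [measure_eq_zero_iff_ae_notMem.1 hatom] with ω hω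
    exact propext ⟨fun h => not_lt.2 (le_of_lt (α := ℝ) h),
      fun h => lt_of_le_of_ne (α := ℝ) (not_lt.1 h) hω⟩
  rw [hlt, probReal_compl_eq_one_sub (measurableSet_lt measurable_const hA), sub_sub_cancel_left]

end IsBrownianMotion

end Brownian

theorem asian_call_delta (hB : IsBrownianMotion P B)
    (κ σ r τ S₀ : ℝ) (hκ : 0 < κ) (hσ : 0 < σ) (hτ : 0 < τ) (hS : 0 < S₀) :
    HasDerivAt
      (fun S => S / (τ * σ ^ 2) * Real.exp (-r * τ) *
        ∫ ω, max (A B (σ ^ 2 * τ) ω - σ ^ 2 * κ * τ / S) 0 ∂P)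
      (Real.exp (-r * τ) + κ / S₀ *
        Real.exp (-r * τ - 2 / (σ ^ 2 * κ * τ / S₀)) *
        (σ ^ 2 * κ * τ / S₀ *
            (∫ ω, (σ ^ 2 * κ * τ / S₀ + A B (τ * σ ^ 2) ω)⁻¹ *
              Real.exp (2 * M B (τ * σ ^ 2) ω / (σ ^ 2 * κ * τ / S₀ + A B (τ * σ ^ 2) ω)) ∂P)
          - ∫ ω, Real.exp (2 * M B (τ * σ ^ 2) ω
              / (σ ^ 2 * κ * τ / S₀ + A B (τ * σ ^ 2) ω)) ∂P)) S₀ := by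
  have := hB.isProbabilityMeasure
  have ht : 0 < τ * σ ^ 2 := by positivity
  have ha : 0 < σ ^ 2 * κ * τ / S₀ := by positivity
  rw [mul_comm (σ ^ 2) τ, hB.integral_inv_mul_exp_two_mul_M_div ht ha,
    hB.integral_exp_two_mul_M_div ht ha, exp_sub]
  have hstrike := hasDerivAt_const_div (σ ^ 2 * κ * τ) hS.ne'
  have hexpectation := (hB.hasDerivAt_integral_max_A_sub_zero ht ha).comp S₀ hstrike
  have hfactor : HasDerivAt (fun S => S / (τ * σ ^ 2) * exp (-r * τ))
      (1 / (τ * σ ^ 2) * exp (-r * τ)) S₀ := ((hasDerivAt_id S₀).div_const _).mul_const _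
  refine (hfactor.mul hexpectation).congr_deriv ?_
  rw [Function.comp_apply, integral_max_sub_zero_eq_add (hB.integrable_A ht), hB.integral_A ht]
  field_simp
  ring
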